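/- arXiv:2302.02417 — 4 statements merged into one kernel-verified Lean document; each statement's English description precedes it below -/
import Mathlib

section
/- For every k ≥ 1, there exists a cograph G on 4k vertices such that neither G nor its complement contains K_{k+1, k+1} as a subgraph. -/
/-!
Split the `4k` vertices into four classes of size `k`. Three of them are the parts of a complete
tripartite graph, the fourth (class `3`) is a clique, and there are no edges between the clique and
the rest. A set of `k + 1` vertices is not contained in one class (`exists_ne_of_card`), and this is
the only counting involved.

In a biclique `(A, B)` of the graph itself, no vertex can be in class `3`, as otherwise all of them
would be. So `A` and `B` each meet two of the three parts, hence share one, although two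
vertices of one part are not adjacent. In a biclique `(A, B)` of the complement, pick `a ∈ A` and
`b ∈ B` outside class `3`; they must be in the same part. Vertices `a' ∈ A`, `b' ∈ B` outside that
part must then both be in class `3`, where the complement has no edges.
-/

/-- `G` is a cograph, i.e. it has no induced path on four vertices. -/
def IsCograph {V : Type*} (G : SimpleGraph V) : Prop :=
  ¬∃ a b c d : V, a ≠ c ∧ a ≠ d ∧ b ≠ d ∧
    G.Adj a b ∧ G.Adj b c ∧ G.Adj c d ∧ ¬G.Adj a c ∧ ¬G.Adj a d ∧ ¬G.Adj b d

/-- `G` contains a complete bipartite subgraph `K_{m,m}`. -/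
def HasBiclique {V : Type*} (G : SimpleGraph V) (m : ℕ) : Prop :=
  ∃ A B : Finset V, Disjoint A B ∧ A.card = m ∧ B.card = m ∧
    ∀ a ∈ A, ∀ b ∈ B, G.Adj a b

/-- The graph determined by a map `c` to four classes: complete tripartite on the classes `0, 1, 2`,
a clique on the class `3`, and no edges between these two pieces. -/
def classGraph {V : Type*} (c : V → Fin 4) : SimpleGraph V where
  Adj u v := u ≠ v ∧ ((c u = 3 ∧ c v = 3) ∨ (c u ≠ 3 ∧ c v ≠ 3 ∧ c u ≠ c v))
  symm := ⟨fun u v h => by grind⟩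
  loopless := ⟨fun u h => h.1 rfl⟩

theorem classGraph_adj {V : Type*} (c : V → Fin 4) (u v : V) :
    (classGraph c).Adj u v ↔
      u ≠ v ∧ ((c u = 3 ∧ c v = 3) ∨ (c u ≠ 3 ∧ c v ≠ 3 ∧ c u ≠ c v)) :=
  Iff.rfl

theorem isCograph_classGraph {V : Type*} (c : V → Fin 4) : IsCograph (classGraph c) := by
  rintro ⟨x, y, z, w, hxz, hxw, hyw, h₁, h₂, h₃, n₁, n₂, n₃⟩
  simp only [classGraph_adj] at *
  grind

theorem exists_ne_of_card {k : ℕ} {A : Finset (Fin (4 * k))} (hA : A.card = k + 1) (i : Fin 4) :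
    ∃ a ∈ A, (finProdFinEquiv.symm a).1 ≠ i := by
  by_contra! h
  -- If `A` lies in class `i`, the second coordinate is injective on `A`, with values in `Fin k`.
  have hle : A.card ≤ (Finset.univ : Finset (Fin k)).card := by
    refine Finset.card_le_card_of_injOn (fun a => (finProdFinEquiv.symm a).2)
      (fun _ _ => Finset.mem_coe.2 (Finset.mem_univ _)) ?_
    intro a ha b hb hab
    exact finProdFinEquiv.symm.injective (Prod.ext ((h a ha).trans (h b hb).symm) hab)
  rw [Finset.card_univ, Fintype.card_fin] at hle
  omega

/-- for every `k ≥ 1` there is a cograph on `4k` vertices such that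
neither it nor its complement contains `K_{k+1,k+1}`. -/
theorem stmt_5 (k : ℕ) (hk : 1 ≤ k) :
    ∃ G : SimpleGraph (Fin (4 * k)), IsCograph G ∧
      ¬HasBiclique G (k + 1) ∧ ¬HasBiclique Gᶜ (k + 1) := by
  refine ⟨classGraph fun v => (finProdFinEquiv.symm v).1, isCograph_classGraph _, ?_, ?_⟩
  · rintro ⟨A, B, -, hA, hB, h⟩
    obtain ⟨a, ha, -⟩ := exists_ne_of_card hA 3
    obtain ⟨a', ha', haa⟩ := exists_ne_of_card hA (finProdFinEquiv.symm a).1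
    obtain ⟨b, hb, -⟩ := exists_ne_of_card hB 3
    obtain ⟨b', hb', hbb⟩ := exists_ne_of_card hB (finProdFinEquiv.symm b).1
    have h₁ := ((classGraph_adj _ _ _).1 (h a ha b hb)).2
    have h₂ := ((classGraph_adj _ _ _).1 (h a ha b' hb')).2
    have h₃ := ((classGraph_adj _ _ _).1 (h a' ha' b hb)).2
    have h₄ := ((classGraph_adj _ _ _).1 (h a' ha' b' hb')).2
    beta_reduce at h₁ h₂ h₃ h₄
    -- Two classes met by `A` and two met by `B` would be four distinct classes other than `3`.
    generalize (finProdFinEquiv.symm a).1 = p at *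
    generalize (finProdFinEquiv.symm a').1 = p' at *
    generalize (finProdFinEquiv.symm b).1 = q at *
    generalize (finProdFinEquiv.symm b').1 = q' at *
    omega
  · rintro ⟨A, B, -, hA, hB, h⟩
    obtain ⟨a, ha, ha₃⟩ := exists_ne_of_card hA 3
    obtain ⟨a', ha', haa⟩ := exists_ne_of_card hA (finProdFinEquiv.symm a).1
    obtain ⟨b, hb, hb₃⟩ := exists_ne_of_card hB 3
    obtain ⟨b', hb', hbb⟩ := exists_ne_of_card hB (finProdFinEquiv.symm b).1
    have h₁ := h a ha b hb
    have h₂ := h a ha b' hb'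
    have h₃ := h a' ha' b hb
    have h₄ := h a' ha' b' hb'
    simp only [SimpleGraph.compl_adj, classGraph_adj] at h₁ h₂ h₃ h₄
    grind
end

section
/- Let G be a chordal graph on n vertices. Then G or its complement contains a complete bipartite subgraph K_{m,m} with m ≥ ⌊2n/9⌋. -/
/-!
Suppose that neither `G` nor its complement contains `K_{m,m}`, where `9 * m ≤ 2 * n` and `0 < m`.

The only input from chordality is `IsChordal.exists_full_vertex`: if the neighbourhood of a
connected set is a clique, some vertex of the set is adjacent to all of it. It replaces the tree
representation, since it allows one to move from a clique to the next one inside a component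
(`IsChordal.descend`).

There is a clique `K`, necessarily of size less than `2 * m`, such that all components of `G - K`
have fewer than `m` vertices (`NoBiclique.exists_central`). These components cannot be grouped into
two parts of size at least `m`. As they have at least `5 * m / 2` vertices together, a greedy
argument (`NoBiclique.greedy`) shows that exactly three of them, `X`, `Y`, `Z`, have more than
`m / 2` vertices, and that the remainder `R` is small.

Each of the three contains a set `D` of at least `m / 2` vertices such that fewer than `m` vertices
of `K` have a neighbour in `D` (`NoBiclique.branch`). For two of them, `D` in `X` and `D'` in `Y`,
say, there are no edges between `D ∪ D'` and the union of `Z`, `R` and the vertices of `K` with no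
neighbour in `D ∪ D'`, so this union has fewer than `m` vertices (`NoBiclique.cross`). Summing these
six inequalities, and counting how often each vertex of `K` contributes (`two_mul_card_le`), gives
`2 * n < 9 * m`, a contradiction.
-/

/-- `G` is chordal: it has no induced cycle of length at least 4. -/
def IsChordal {V : Type*} (G : SimpleGraph V) : Prop :=
  ∀ n : ℕ, 4 ≤ n → ∀ f : ZMod n ↪ V,
    ¬(∀ i j : ZMod n, G.Adj (f i) (f j) ↔ (j = i + 1 ∨ i = j + 1))

/-! ### Connected sets and unions of components -/

/-- `P` is a union of connected components of `G[U]`: no edge of `G` joins `P` to `U \ P`. -/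
def ClosedIn {V : Type*} (G : SimpleGraph V) (U P : Finset V) : Prop :=
  P ⊆ U ∧ ∀ a ∈ P, ∀ b ∈ U, b ∉ P → ¬G.Adj a b

/-- `C` is nonempty and induces a connected subgraph, expressed by the absence of a proper
nonempty union of components. -/
def ConnSet {V : Type*} (G : SimpleGraph V) (C : Finset V) : Prop :=
  C.Nonempty ∧ ∀ P, ClosedIn G C P → P.Nonempty → P = C

open Classical in
/-- The open neighbourhood of the set `D`: vertices outside `D` with a neighbour in `D`. -/
noncomputable def nbr {V : Type*} [Fintype V] (G : SimpleGraph V) (D : Finset V) : Finset V :=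
  Finset.univ.filter fun v => v ∉ D ∧ ∃ d ∈ D, G.Adj d v

theorem mem_nbr {V : Type*} [Fintype V] {G : SimpleGraph V} {D : Finset V} {v : V} :
    v ∈ nbr G D ↔ v ∉ D ∧ ∃ d ∈ D, G.Adj d v := by
  simp [nbr]

theorem exists_connSet {V : Type*} (G : SimpleGraph V) {U W : Finset V}
    (hW : ClosedIn G U W) (hne : W.Nonempty) :
    ∃ C, C ⊆ W ∧ ClosedIn G U C ∧ ConnSet G C := by
  classical
  induction W using Finset.strongInduction with
  | H W ih =>
    by_cases hc : ∀ P, ClosedIn G W P → P.Nonempty → P = W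
    · exact ⟨W, subset_rfl, hW, hne, hc⟩
    · push Not at hc
      obtain ⟨P, hP, hPn, hPW⟩ := hc
      have hPU : ClosedIn G U P := by
        refine ⟨hP.1.trans hW.1, fun a ha b hb hbP => ?_⟩
        by_cases hbW : b ∈ W
        · exact hP.2 a ha b hbW hbP
        · exact hW.2 a (hP.1 ha) b hb hbW
      obtain ⟨C, h1, h2, h3⟩ := ih P (Finset.ssubset_iff_subset_ne.2 ⟨hP.1, hPW⟩) hPU hPn
      exact ⟨C, h1.trans hP.1, h2, h3⟩

/-- A connected set is either contained in, or disjoint from, any set that no edge leaves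
within it. -/
theorem ConnSet.subset_or_disjoint {V : Type*} {G : SimpleGraph V} {C : Finset V}
    (hC : ConnSet G C) (X : Finset V)
    (h : ∀ a ∈ C, a ∈ X → ∀ b ∈ C, b ∉ X → ¬G.Adj a b) : C ⊆ X ∨ Disjoint C X := by
  classical
  by_cases hne : (C ∩ X).Nonempty
  · left
    have := hC.2 (C ∩ X) ⟨Finset.inter_subset_left, ?_⟩ hne
    · exact Finset.inter_eq_left.1 this
    · intro a ha b hb hbn
      simp only [Finset.mem_inter, not_and] at ha hbn
      exact h a ha.1 ha.2 b hb (hbn hb)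
  · right
    rwa [Finset.not_nonempty_iff_eq_empty, ← Finset.disjoint_iff_inter_eq_empty] at hne

/-! ### Neighbourhoods of connected sets in chordal graphs -/

theorem ConnSet.preconnected {V : Type*} {G : SimpleGraph V} {D : Finset V}
    (hD : ConnSet G D) : (G.induce (D : Set V)).Preconnected := by
  classical
  intro u v
  let P : Finset V := D.filter fun x => ∃ hx : x ∈ (D : Set V), (G.induce (D : Set V)).Reachable u ⟨x, hx⟩
  have hP : P = D := by
    apply hD.2
    · refine ⟨Finset.filter_subset _ _, fun a ha b hb hbP hadj => hbP ?_⟩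
      obtain ⟨haD, hx, hr⟩ := Finset.mem_filter.1 ha
      refine Finset.mem_filter.2 ⟨hb, hb, hr.trans ?_⟩
      apply SimpleGraph.Adj.reachable
      simpa using hadj
    · exact ⟨u, Finset.mem_filter.2 ⟨u.2, u.2, SimpleGraph.Reachable.refl _⟩⟩
  have hv : (v : V) ∈ P := by rw [hP]; exact v.2
  obtain ⟨_, _, hr⟩ := Finset.mem_filter.1 hv
  exact hr

/-- Inside a connected set `D`, a shortest path from `d` to the vertices satisfying `T` is an
induced path whose last vertex is the only one satisfying `T`. -/
theorem exists_induced_path {V : Type*} {G : SimpleGraph V} {D : Finset V}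
    (hD : ConnSet G D) {d : V} (hd : d ∈ D) (T : V → Prop) (hT : ∃ b ∈ D, T b) :
    ∃ (k : ℕ) (p : ℕ → V), p 0 = d ∧ (∀ i, p i ∈ D) ∧
      (∀ i < k, G.Adj (p i) (p (i + 1))) ∧
      (∀ i j, i < j → j ≤ k → p i ≠ p j ∧ (G.Adj (p i) (p j) → j = i + 1)) ∧
      T (p k) ∧ ∀ i < k, ¬T (p i) := by
  classical
  have hpre := hD.preconnected
  set H := G.induce (D : Set V) with hH
  let d' : (D : Set V) := ⟨d, by simpa using hd⟩
  have hex : ∃ k, ∃ b : (D : Set V), T b ∧ H.dist d' b = k := by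
    obtain ⟨b, hb, hTb⟩ := hT
    exact ⟨_, ⟨b, by simpa using hb⟩, hTb, rfl⟩
  obtain ⟨b, hTb, hk⟩ := Nat.find_spec hex
  have hmin : ∀ c : (D : Set V), T c → Nat.find hex ≤ H.dist d' c :=
    fun c hc => Nat.find_min' hex ⟨c, hc, rfl⟩
  generalize Nat.find hex = k at hk hmin
  obtain ⟨w, hw⟩ := (hpre d' b).exists_walk_length_eq_dist
  rw [hk] at hw
  have hconn : H.Connected := { preconnected := hpre, nonempty := ⟨d'⟩ }
  have hdist : ∀ i ≤ k, H.dist d' (w.getVert i) = i := by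
    intro i hi
    have h1 : H.dist d' (w.getVert i) ≤ i := by
      refine (SimpleGraph.dist_le (w.take i)).trans ?_
      simp
    have h2 : H.dist (w.getVert i) b ≤ k - i := by
      refine (SimpleGraph.dist_le (w.drop i)).trans ?_
      simp [hw]
    have h3 : H.dist d' b ≤ _ := hconn.dist_triangle (v := w.getVert i)
    omega
  refine ⟨k, fun i => w.getVert i, ?_, ?_, ?_, ?_, ?_, ?_⟩
  · simp [d']
  · intro i; exact (w.getVert i).2
  · intro i hi
    have := w.adj_getVert_succ (i := i) (by omega)
    simpa [hH] using this
  · intro i j hij hj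
    have hi := hdist i (by omega)
    have hj' := hdist j hj
    constructor
    · intro he
      have : w.getVert i = w.getVert j := Subtype.ext he
      rw [this] at hi; omega
    · intro hadj
      have hadj' : H.Adj (w.getVert i) (w.getVert j) := by simpa [hH] using hadj
      have h3 : H.dist d' (w.getVert j) ≤ _ := hconn.dist_triangle (v := w.getVert i)
      rw [SimpleGraph.dist_eq_one_iff_adj.2 hadj'] at h3
      omega
  · have : w.getVert k = b := by rw [← hw]; simp
    change T (w.getVert k)
    rw [this]; exact hTb
  · intro i hi hTi
    have := hmin _ hTi
    rw [hdist i hi.le] at this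
    omega

/-- Chordality in terms of a hole listed as `g 0, …, g (n - 1)`. -/
theorem IsChordal.no_hole {V : Type*} {G : SimpleGraph V} (h : IsChordal G) (n : ℕ) (hn : 4 ≤ n)
    (g : ℕ → V) (hinj : ∀ i j, i < j → j < n → g i ≠ g j)
    (hadj : ∀ i j, i < j → j < n → (G.Adj (g i) (g j) ↔ j = i + 1 ∨ (i = 0 ∧ j + 1 = n))) :
    False := by
  obtain ⟨N, rfl⟩ : ∃ N, n = N + 1 := ⟨n - 1, by omega⟩
  have hsucc : ∀ i j : ZMod (N + 1), j = i + 1 ↔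
      (j.val = i.val + 1 ∨ (i.val = N ∧ j.val = 0)) := by
    intro i j
    have hi := ZMod.val_lt i
    have hj := ZMod.val_lt j
    rw [← (ZMod.val_injective (N + 1)).eq_iff, ZMod.val_add, ZMod.val_one'' (by omega)]
    rcases Nat.lt_or_ge (i.val + 1) (N + 1) with h1 | h1
    · rw [Nat.mod_eq_of_lt h1]; omega
    · have h2 : i.val + 1 = N + 1 := by omega
      rw [h2, Nat.mod_self]; omega
  refine h (N + 1) hn ⟨fun i => g i.val, ?_⟩ ?_
  · intro i j hij
    apply ZMod.val_injective
    by_contra hne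
    have hi := ZMod.val_lt i
    have hj := ZMod.val_lt j
    rcases Nat.lt_or_gt_of_ne hne with h1 | h1
    · exact hinj _ _ h1 hj hij
    · exact hinj _ _ h1 hi hij.symm
  · intro i j
    rw [hsucc, hsucc]
    have hi := ZMod.val_lt i
    have hj := ZMod.val_lt j
    change G.Adj (g i.val) (g j.val) ↔ _
    rcases Nat.lt_trichotomy i.val j.val with h1 | h1 | h1
    · rw [hadj _ _ h1 hj]; omega
    · rw [h1]
      simp only [SimpleGraph.irrefl, false_iff]
      omega
    · rw [G.adj_comm, hadj _ _ h1 hi]; omega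

/-- In a chordal graph, if the neighbourhood of a connected set `D` is a clique, then some vertex
of `D` is adjacent to the whole neighbourhood. Take `d ∈ D` with the most neighbours in it and
suppose that `d` misses `s`. Along a shortest path in `D` from `d` to a neighbour of `s`, the last
vertex must miss some neighbour `s'` of `d`; the part of the path after its last neighbour of `s'`
closes up through `s` and `s'` to a hole. -/
theorem IsChordal.exists_full_vertex {V : Type*} [Fintype V] {G : SimpleGraph V} (h : IsChordal G)
    {D : Finset V} (hD : ConnSet G D)
    (hS : ∀ s ∈ nbr G D, ∀ t ∈ nbr G D, s ≠ t → G.Adj s t) :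
    ∃ d ∈ D, ∀ s ∈ nbr G D, G.Adj d s := by
  classical
  obtain ⟨d, hd, hmax⟩ := Finset.exists_max_image D
    (fun d => ((nbr G D).filter fun s => G.Adj d s).card) hD.1
  refine ⟨d, hd, fun s hs => ?_⟩
  by_contra hds
  obtain ⟨hsD, b, hb, hbs⟩ := mem_nbr.1 hs
  obtain ⟨k, p, hp0, hpD, hpadj, hpind, hpk, hpn⟩ :=
    exists_induced_path hD hd (fun v => G.Adj v s) ⟨b, hb, hbs⟩
  have hex : ∃ s' ∈ nbr G D, G.Adj d s' ∧ ¬G.Adj (p k) s' := by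
    by_contra hcon
    push Not at hcon
    have hlt : ((nbr G D).filter fun s => G.Adj d s).card <
        ((nbr G D).filter fun s => G.Adj (p k) s).card := by
      apply Finset.card_lt_card
      rw [Finset.ssubset_iff_of_subset]
      · exact ⟨s, by simp [hs, hpk], by simp [hds]⟩
      · intro x hx
        rw [Finset.mem_filter] at hx ⊢
        exact ⟨hx.1, hcon x hx.1 hx.2⟩
    have := hmax (p k) (hpD k)
    omega
  obtain ⟨s', hs', hds', hks'⟩ := hex
  have hs'D := (mem_nbr.1 hs').1
  have hss' : s ≠ s' := by rintro rfl; exact hds hds'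
  -- `j` is the last index on the path with `p j` adjacent to `s'`.
  let j := Nat.findGreatest (fun i => G.Adj (p i) s') k
  have hj : G.Adj (p j) s' :=
    Nat.findGreatest_spec (P := fun i => G.Adj (p i) s') (Nat.zero_le k) (by simpa [hp0] using hds')
  have hjk : j ≤ k := Nat.findGreatest_le k
  have hjlt : j < k := lt_of_le_of_ne hjk (by intro he; rw [he] at hj; exact hks' hj)
  have hjmax : ∀ i, j < i → i ≤ k → ¬G.Adj (p i) s' := fun i h1 h2 =>
    Nat.findGreatest_is_greatest h1 h2
  have hsp : ∀ i, p i ≠ s := fun i he => hsD (he ▸ hpD i)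
  have hs'p : ∀ i, p i ≠ s' := fun i he => hs'D (he ▸ hpD i)
  have hadjss := hS s hs s' hs' hss'
  refine h.no_hole (k - j + 3) (by omega)
    (fun i => if i ≤ k - j then p (j + i) else if i = k - j + 1 then s else s') ?_ ?_
  · intro a c hac hc
    by_cases h1 : c ≤ k - j
    · simp only [h1, if_true, show a ≤ k - j by omega]
      exact (hpind _ _ (by omega) (by omega)).1
    · by_cases h2 : c = k - j + 1
      · simp [h2, show a ≤ k - j by omega, hsp]
      · by_cases h3 : a ≤ k - j
        · simp [h1, h2, h3, hs'p]
        · simp [h1, h2, show a = k - j + 1 by omega, hss']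
  · intro a c hac hc
    by_cases h1 : c ≤ k - j
    · simp only [h1, if_true, show a ≤ k - j by omega]
      constructor
      · intro hh
        have := (hpind _ _ (by omega) (by omega)).2 hh
        omega
      · rintro (rfl | hh)
        · exact hpadj _ (by omega)
        · omega
    · by_cases h2 : c = k - j + 1
      · have ha : a ≤ k - j := by omega
        simp only [h2, ha, if_true, if_false,
          show ¬(k - j + 1 ≤ k - j) by omega]
        constructor
        · intro hh
          by_contra hne
          exact hpn (j + a) (by omega) hh
        · rintro (hh | hh)
          · have : j + a = k := by omega
            rw [this]; exact hpk
          · omega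
      · by_cases h3 : a ≤ k - j
        · simp only [h1, h2, h3, if_true, if_false]
          constructor
          · intro hh
            by_contra hne
            exact hjmax (j + a) (by omega) (by omega) hh
          · rintro (hh | hh)
            · omega
            · rw [hh.1]; exact hj
        · have ha : a = k - j + 1 := by omega
          subst ha
          simp only [h1, h2, if_true, if_false, show ¬(k - j + 1 ≤ k - j) by omega]
          exact iff_of_true hadjss (by omega)

/-! ### Greedy balancing of components -/

/-- `G` has no two disjoint sets of size `m` with no edge between them, and no two disjoint
sets of size `m` with all edges between them. -/
structure NoBiclique {V : Type*} (G : SimpleGraph V) (m : ℕ) : Prop where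
  anti : ∀ A B : Finset V, Disjoint A B → (∀ a ∈ A, ∀ b ∈ B, ¬G.Adj a b) →
    m ≤ A.card → m ≤ B.card → False
  full : ∀ A B : Finset V, Disjoint A B → (∀ a ∈ A, ∀ b ∈ B, G.Adj a b) →
    m ≤ A.card → m ≤ B.card → False

theorem noBiclique_of_not {V : Type*} {G : SimpleGraph V} {m : ℕ}
    (h1 : ¬HasBiclique G m) (h2 : ¬HasBiclique Gᶜ m) : NoBiclique G m := by
  constructor
  · intro A B hd hAB hA hB
    obtain ⟨A', hA', hAc⟩ := Finset.exists_subset_card_eq hA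
    obtain ⟨B', hB', hBc⟩ := Finset.exists_subset_card_eq hB
    refine h2 ⟨A', B', Finset.disjoint_of_subset_left hA' (Finset.disjoint_of_subset_right hB' hd),
      hAc, hBc, fun a ha b hb => ?_⟩
    rw [SimpleGraph.compl_adj]
    refine ⟨?_, hAB a (hA' ha) b (hB' hb)⟩
    rintro rfl
    exact Finset.disjoint_left.1 hd (hA' ha) (hB' hb)
  · intro A B hd hAB hA hB
    obtain ⟨A', hA', hAc⟩ := Finset.exists_subset_card_eq hA
    obtain ⟨B', hB', hBc⟩ := Finset.exists_subset_card_eq hB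
    exact h1 ⟨A', B', Finset.disjoint_of_subset_left hA' (Finset.disjoint_of_subset_right hB' hd),
      hAc, hBc, fun a ha b hb => hAB a (hA' ha) b (hB' hb)⟩

theorem ClosedIn.union {V : Type*} [DecidableEq V] {G : SimpleGraph V} {U P Q : Finset V}
    (hP : ClosedIn G U P) (hQ : ClosedIn G U Q) : ClosedIn G U (P ∪ Q) := by
  refine ⟨Finset.union_subset hP.1 hQ.1, fun a ha b hb hn => ?_⟩
  simp only [Finset.mem_union, not_or] at ha hn
  rcases ha with ha | ha
  · exact hP.2 a ha b hb hn.1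
  · exact hQ.2 a ha b hb hn.2

theorem ClosedIn.sdiff {V : Type*} [DecidableEq V] {G : SimpleGraph V} {U P : Finset V}
    (hP : ClosedIn G U P) : ClosedIn G U (U \ P) := by
  refine ⟨Finset.sdiff_subset, fun a ha b hb hn hadj => ?_⟩
  simp only [Finset.mem_sdiff, not_and, not_not] at ha hn
  exact hP.2 b (hn hb) a ha.1 ha.2 hadj.symm

theorem ClosedIn.empty {V : Type*} (G : SimpleGraph V) (U : Finset V) : ClosedIn G U ∅ :=
  ⟨by simp, by simp⟩

/-- Greedy balancing. Let `I` and `J` be disjoint unions of components of `G[U]`, all other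
components having size at most `m / 2`. Adding these one at a time to `I` cannot make its size
reach `m`: on first reaching `m` the size is still below `3m / 2`, which leaves more than `m` of the
at least `5m / 2` vertices on the other side. Hence all of `U \ J` gets added. -/
theorem NoBiclique.greedy {V : Type*} [DecidableEq V] {G : SimpleGraph V} {m : ℕ}
    (hG : NoBiclique G m) {U I J : Finset V} (hU : 5 * m ≤ 2 * U.card)
    (hI : ClosedIn G U I) (hJ : ClosedIn G U J) (hIJ : Disjoint I J) (hIm : I.card < m)
    (hsmall : ∀ C, ConnSet G C → ClosedIn G U C → Disjoint C I → Disjoint C J →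
      2 * C.card ≤ m) : (U \ J).card < m := by
  induction hk : (U \ J).card - I.card using Nat.strong_induction_on generalizing I with
  | _ k ih =>
    by_contra hcon
    have hR : ClosedIn G U (U \ (I ∪ J)) := (hI.union hJ).sdiff
    have hIUJ : I ⊆ U \ J := fun x hx =>
      Finset.mem_sdiff.2 ⟨hI.1 hx, Finset.disjoint_left.1 hIJ hx⟩
    have hne : (U \ (I ∪ J)).Nonempty := by
      rw [Finset.nonempty_iff_ne_empty]
      intro he
      have : U \ J ⊆ I := by
        intro x hx
        by_contra hxI
        have : x ∈ U \ (I ∪ J) := by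
          simp only [Finset.mem_sdiff, Finset.mem_union] at hx ⊢
          tauto
        rw [he] at this
        simp at this
      have := Finset.card_le_card this
      omega
    obtain ⟨C, hCR, hCU, hC⟩ := exists_connSet G hR hne
    have hCI : Disjoint C I := by
      rw [Finset.disjoint_left]
      intro x hx hxI
      have := hCR hx
      simp [hxI] at this
    have hCJ : Disjoint C J := by
      rw [Finset.disjoint_left]
      intro x hx hxI
      have := hCR hx
      simp [hxI] at this
    have hCs := hsmall C hC hCU hCI hCJ
    have hcard := Finset.card_union_of_disjoint hCI.symm
    have hIC : ClosedIn G U (I ∪ C) := hI.union hCU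
    have hCpos := hC.1.card_pos
    have hsd := Finset.card_sdiff_add_card_eq_card hIC.1
    by_cases hlt : (I ∪ C).card < m
    · refine hcon (ih _ ?_ hIC (Finset.disjoint_union_left.2 ⟨hIJ, hCJ⟩) hlt ?_ rfl)
      · omega
      · intro C' h1 h2 h3 h4
        exact hsmall C' h1 h2 (Finset.disjoint_of_subset_right Finset.subset_union_left h3) h4
    · refine hG.anti (I ∪ C) (U \ (I ∪ C)) Finset.disjoint_sdiff ?_ (by omega) (by omega)
      intro a ha b hb
      exact hIC.2 a ha b (Finset.mem_sdiff.1 hb).1 (Finset.mem_sdiff.1 hb).2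

/-! ### Descent in the clique tree -/

theorem NoBiclique.card_clique {V : Type*} [DecidableEq V] {G : SimpleGraph V} {m : ℕ}
    (hG : NoBiclique G m) {K : Finset V} (hK : ∀ s ∈ K, ∀ t ∈ K, s ≠ t → G.Adj s t) :
    K.card < 2 * m := by
  by_contra hc
  obtain ⟨A, hA, hAc⟩ := Finset.exists_subset_card_eq (s := K) (n := m) (by omega)
  have hsd := Finset.card_sdiff_add_card_eq_card hA
  refine hG.full A (K \ A) Finset.disjoint_sdiff ?_ hAc.ge (by omega)
  intro a ha b hb
  rw [Finset.mem_sdiff] at hb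
  refine hK a (hA ha) b hb.1 ?_
  rintro rfl
  exact hb.2 ha

/-- Descending in the clique tree: a connected set with clique neighbourhood and at least `t`
vertices contains a minimal set `D` of that kind. A vertex `d` of `D` adjacent to the whole
neighbourhood of `D` yields the clique `insert d (nbr G D)`, and by minimality the components of
`D` cut off by this clique have fewer than `t` vertices. -/
theorem IsChordal.descend {V : Type*} [Fintype V] [DecidableEq V] {G : SimpleGraph V}
    (h : IsChordal G) (t : ℕ) {X : Finset V} (hX : ConnSet G X)
    (hXn : ∀ s ∈ nbr G X, ∀ t ∈ nbr G X, s ≠ t → G.Adj s t) (hXt : t ≤ X.card) :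
    ∃ D ⊆ X, t ≤ D.card ∧ ConnSet G D ∧ ∃ d ∈ D,
      (∀ a ∈ insert d (nbr G D), ∀ b ∈ insert d (nbr G D), a ≠ b → G.Adj a b) ∧
      ∀ C, ConnSet G C → C ⊆ D → d ∉ C → nbr G C ⊆ insert d (nbr G D) → C.card < t := by
  induction X using Finset.strongInduction with
  | H X ih =>
    obtain ⟨d, hd, hfull⟩ := h.exists_full_vertex hX hXn
    have hcl : ∀ a ∈ insert d (nbr G X), ∀ b ∈ insert d (nbr G X), a ≠ b → G.Adj a b := by
      intro a ha b hb hab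
      rw [Finset.mem_insert] at ha hb
      rcases ha with rfl | ha <;> rcases hb with rfl | hb
      · exact absurd rfl hab
      · exact hfull b hb
      · exact (hfull a ha).symm
      · exact hXn a ha b hb hab
    by_cases hex : ∃ C, ConnSet G C ∧ C ⊆ X ∧ d ∉ C ∧ nbr G C ⊆ insert d (nbr G X) ∧ t ≤ C.card
    · obtain ⟨C, hC, hCX, hdC, hCn, hCt⟩ := hex
      obtain ⟨D, hDC, hD⟩ := ih C (Finset.ssubset_iff_subset_ne.2 ⟨hCX, by
        rintro rfl
        exact hdC hd⟩) hC (fun a ha b hb => hcl a (hCn ha) b (hCn hb)) hCt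
      exact ⟨D, hDC.trans hCX, hD⟩
    · push Not at hex
      exact ⟨X, subset_rfl, hXt, hX, d, hd, hcl, hex⟩

/-! ### The central clique and its branches -/

theorem nbr_subset_of_closedIn {V : Type*} [Fintype V] [DecidableEq V] {G : SimpleGraph V}
    {K C : Finset V} (hC : ClosedIn G (Finset.univ \ K) C) : nbr G C ⊆ K := by
  intro v hv
  obtain ⟨hvC, c, hc, hcv⟩ := mem_nbr.1 hv
  by_contra hvK
  exact hC.2 c hc v (by simp [hvK]) hvC hcv

/-- A clique whose removal leaves only components with fewer than `m` vertices. The descent at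
threshold `m` ends with a set of at least `m` vertices, so any component away from it has fewer
than `m`. -/
theorem NoBiclique.exists_central {V : Type*} [Fintype V] [DecidableEq V] {G : SimpleGraph V}
    {m : ℕ} (hG : NoBiclique G m) (h : IsChordal G) :
    ∃ K : Finset V, (∀ a ∈ K, ∀ b ∈ K, a ≠ b → G.Adj a b) ∧
      ∀ C, ConnSet G C → ClosedIn G (Finset.univ \ K) C → C.card < m := by
  by_cases hex : ∃ X, ConnSet G X ∧ (∀ s ∈ nbr G X, ∀ t ∈ nbr G X, s ≠ t → G.Adj s t) ∧ m ≤ X.card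
  · obtain ⟨X, hX, hXn, hXm⟩ := hex
    obtain ⟨D, -, hDm, hD, d, hd, hcl, hmin⟩ := h.descend m hX hXn hXm
    refine ⟨_, hcl, fun C hC hCU => ?_⟩
    have hCn := nbr_subset_of_closedIn hCU
    have hCK : ∀ c ∈ C, c ∉ insert d (nbr G D) := fun c hc => (Finset.mem_sdiff.1 (hCU.1 hc)).2
    have hCD : ∀ a ∈ C, a ∈ D → ∀ b ∈ C, b ∉ D → ¬G.Adj a b := by
      intro a ha haD b hb hbD hadj
      exact hCK b hb (Finset.mem_insert_of_mem (mem_nbr.2 ⟨hbD, a, haD, hadj⟩))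
    rcases hC.subset_or_disjoint D hCD with h1 | h1
    · exact hmin C hC h1 (fun hdC => hCK d hdC (by simp)) hCn
    · by_contra hCm
      refine hG.anti C D h1 ?_ (by omega) hDm
      intro a ha b hb hadj
      exact hCK a ha (Finset.mem_insert_of_mem
        (mem_nbr.2 ⟨Finset.disjoint_left.1 h1 ha, b, hb, hadj.symm⟩))
  · push Not at hex
    refine ⟨∅, by simp, fun C hC hCU => hex C hC ?_⟩
    intro s hs
    have := nbr_subset_of_closedIn hCU hs
    simp at this

theorem ClosedIn.mono {V : Type*} {G : SimpleGraph V} {U U' P : Finset V}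
    (hP : ClosedIn G U P) (hU : U' ⊆ U) (hPU : P ⊆ U') : ClosedIn G U' P :=
  ⟨hPU, fun a ha b hb => hP.2 a ha b (hU hb)⟩

/-- The situation around a central clique `K`: three components of `G - K` and a remainder
without large components. A branch `X` contains a set `D` of at least `m / 2` vertices with fewer
than `m` neighbours in `K`.

Take `D` minimal, let `Q` be the part in `X` of the clique `insert d (nbr G D)`. All components
of `G - (K ∪ Q)` other than `Y`, `Z` have size at most `m / 2`, so greedy balancing forces
`2 * m ≤ |K| + |Q|`. If `D` had `m` neighbours in `K`, then `m` of them together with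
`Q` and the rest of `K` would be a biclique. -/
theorem NoBiclique.branch {V : Type*} [Fintype V] [DecidableEq V] {G : SimpleGraph V}
    {m : ℕ} (hG : NoBiclique G m) (h : IsChordal G) (hn : 9 * m ≤ 2 * Fintype.card V)
    {K X Y Z : Finset V} (hK : ∀ a ∈ K, ∀ b ∈ K, a ≠ b → G.Adj a b)
    (hXc : ConnSet G X)
    (hX : ClosedIn G (Finset.univ \ K) X) (hY : ClosedIn G (Finset.univ \ K) Y)
    (hZ : ClosedIn G (Finset.univ \ K) Z)
    (hXY : Disjoint X Y) (hXZ : Disjoint X Z) (hYZ : Disjoint Y Z)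
    (hXm : X.card < m) (hYm : Y.card < m) (hZm : Z.card < m) (hXb : m ≤ 2 * X.card)
    (hsmall : ∀ C, C ⊆ Finset.univ \ K → Disjoint C X → Disjoint C Y → Disjoint C Z →
      2 * C.card ≤ m) :
    ∃ D E : Finset V, D ⊆ X ∧ m ≤ 2 * D.card ∧ E ⊆ K ∧ E.card < m ∧
      ∀ a ∈ D, ∀ b ∈ K, b ∉ E → ¬G.Adj a b := by
  have hXn := nbr_subset_of_closedIn hX
  obtain ⟨D, hDX, hDm, hD, d, hd, hcl, hmin⟩ := h.descend ((m + 1) / 2) hXc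
    (fun a ha b hb => hK a (hXn ha) b (hXn hb)) (by omega)
  refine ⟨D, K ∩ nbr G D, hDX, by omega, Finset.inter_subset_left, ?_, ?_⟩
  swap
  · intro a ha b hb hbE hadj
    refine hbE (Finset.mem_inter.2 ⟨hb, mem_nbr.2 ⟨fun hbD => ?_, a, ha, hadj⟩⟩)
    exact (Finset.mem_sdiff.1 (hX.1 (hDX hbD))).2 hb
  set L := insert d (nbr G D) with hL
  set Q := X ∩ L with hQ
  set U := (Finset.univ : Finset V) \ (K ∪ Q) with hU
  have hKX : Disjoint K X := by
    rw [Finset.disjoint_right]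
    intro x hx
    exact (Finset.mem_sdiff.1 (hX.1 hx)).2
  have hKQ : Disjoint K Q := Finset.disjoint_of_subset_right Finset.inter_subset_left hKX
  have hUK : U ⊆ Finset.univ \ K := Finset.sdiff_subset_sdiff subset_rfl Finset.subset_union_left
  have hYU : Y ⊆ U := by
    intro y hy
    have h1 := Finset.disjoint_right.1 hXY hy
    have h2 := (Finset.mem_sdiff.1 (hY.1 hy)).2
    simp [hU, hQ, h1, h2]
  have hZU : Z ⊆ U := by
    intro y hy
    have h1 := Finset.disjoint_right.1 hXZ hy
    have h2 := (Finset.mem_sdiff.1 (hZ.1 hy)).2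
    simp [hU, hQ, h1, h2]
  have hDL : nbr G D ⊆ K ∪ Q := by
    intro v hv
    obtain ⟨hvD, a, ha, hav⟩ := mem_nbr.1 hv
    by_cases hvX : v ∈ X
    · simp [hQ, hL, hvX, hv]
    · exact Finset.mem_union_left _ (hXn (mem_nbr.2 ⟨hvX, a, hDX ha, hav⟩))
  have hsm : ∀ C, ConnSet G C → ClosedIn G U C → Disjoint C Y → Disjoint C Z →
      2 * C.card ≤ m := by
    intro C hC hCU hCY hCZ
    have hCn := nbr_subset_of_closedIn hCU
    have hCQ : ∀ c ∈ C, c ∉ K ∪ Q := fun c hc => (Finset.mem_sdiff.1 (hCU.1 hc)).2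
    have hCD : ∀ a ∈ C, a ∈ D → ∀ b ∈ C, b ∉ D → ¬G.Adj a b := by
      intro a ha haD b hb hbD hadj
      exact hCQ b hb (hDL (mem_nbr.2 ⟨hbD, a, haD, hadj⟩))
    rcases hC.subset_or_disjoint X
      (fun a ha haX b hb hbX => hX.2 a haX b (hUK (hCU.1 hb)) hbX) with h1 | h1
    · rcases hC.subset_or_disjoint D hCD with h2 | h2
      · have := hmin C hC h2 (fun hdC => hCQ d hdC (by simp [hQ, hL, hDX hd])) ?_
        · omega
        · intro v hv
          obtain ⟨hvC, a, ha, hav⟩ := mem_nbr.1 hv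
          by_cases hvD : v ∈ D
          · rcases Finset.mem_union.1 (hCn hv) with h3 | h3
            · exact absurd (hDX hvD) (Finset.disjoint_left.1 hKX h3)
            · exact (Finset.mem_inter.1 h3).2
          · exact Finset.mem_insert_of_mem (mem_nbr.2 ⟨hvD, a, h2 ha, hav⟩)
      · have h3 := Finset.card_le_card (Finset.union_subset h1 hDX)
        rw [Finset.card_union_of_disjoint h2] at h3
        omega
    · exact hsmall C (hCU.1.trans hUK) h1 hCY hCZ
  have hUc : U.card + (K.card + Q.card) = Fintype.card V := by
    rw [← Finset.card_union_of_disjoint hKQ, hU,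
      Finset.card_sdiff_add_card_eq_card (Finset.subset_univ _), Finset.card_univ]
  have hkq : 2 * m ≤ K.card + Q.card := by
    by_contra hlt
    have h1 := hG.greedy (U := U) (I := Y) (J := Z) (by omega) (hY.mono hUK hYU)
      (hZ.mono hUK hZU) hYZ hYm hsm
    have h2 := Finset.card_sdiff_add_card_eq_card hZU
    omega
  by_contra hE
  obtain ⟨A, hA, hAc⟩ := Finset.exists_subset_card_eq (s := K ∩ nbr G D) (n := m) (by omega)
  have hAK := hA.trans Finset.inter_subset_left
  have hsd := Finset.card_sdiff_add_card_eq_card hAK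
  have hdis : Disjoint (K \ A) Q := Finset.disjoint_of_subset_left Finset.sdiff_subset hKQ
  refine hG.full A ((K \ A) ∪ Q) ?_ ?_ hAc.ge ?_
  · exact Finset.disjoint_union_right.2
      ⟨Finset.disjoint_sdiff, Finset.disjoint_of_subset_left hAK hKQ⟩
  · intro a ha b hb
    rcases Finset.mem_union.1 hb with hb | hb
    · rw [Finset.mem_sdiff] at hb
      refine hK a (hAK ha) b hb.1 ?_
      rintro rfl
      exact hb.2 ha
    · refine hcl a (Finset.mem_insert_of_mem (Finset.mem_inter.1 (hA ha)).2) b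
        (Finset.mem_inter.1 hb).2 ?_
      rintro rfl
      exact Finset.disjoint_left.1 hKQ (hAK ha) hb
  · rw [Finset.card_union_of_disjoint hdis]
    omega

/-- Every vertex of `K` is counted at least twice on the right. -/
theorem two_mul_card_le {V : Type*} [DecidableEq V] {K E F H : Finset V}
    (hE : E ⊆ K) (hF : F ⊆ K) (hH : H ⊆ K) :
    2 * K.card ≤ (K \ (E ∪ F)).card + (K \ (E ∪ H)).card + (K \ (F ∪ H)).card +
      E.card + F.card + H.card := by
  have key : ∀ A ⊆ K, A.card = ∑ v ∈ K, if v ∈ A then 1 else 0 := by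
    intro A hA
    rw [← Finset.sum_filter, Finset.sum_const, smul_eq_mul, mul_one,
      Finset.filter_mem_eq_inter, Finset.inter_eq_right.2 hA]
  rw [key _ (Finset.sdiff_subset (t := E ∪ F)), key _ (Finset.sdiff_subset (t := E ∪ H)),
    key _ (Finset.sdiff_subset (t := F ∪ H)), key E hE, key F hF, key H hH,
    ← Finset.sum_add_distrib, ← Finset.sum_add_distrib, ← Finset.sum_add_distrib,
    ← Finset.sum_add_distrib, ← Finset.sum_add_distrib, mul_comm, ← smul_eq_mul,
    ← Finset.sum_const]
  refine Finset.sum_le_sum fun v hv => ?_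
  by_cases h1 : v ∈ E <;> by_cases h2 : v ∈ F <;> by_cases h3 : v ∈ H <;> simp [h1, h2, h3, hv]

/-- Two of the half-size sets `D`, `D'` face everything that they do not touch: the third branch,
the remainder, and the vertices of `K` adjacent to neither. -/
theorem NoBiclique.cross {V : Type*} [Fintype V] [DecidableEq V] {G : SimpleGraph V}
    {m : ℕ} (hG : NoBiclique G m) {K X Y D D' E E' : Finset V}
    (hX : ClosedIn G (Finset.univ \ K) X) (hY : ClosedIn G (Finset.univ \ K) Y)
    (hXY : Disjoint X Y) (hD : D ⊆ X) (hD' : D' ⊆ Y) (hDm : m ≤ 2 * D.card)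
    (hDm' : m ≤ 2 * D'.card)
    (hE : ∀ a ∈ D, ∀ b ∈ K, b ∉ E → ¬G.Adj a b)
    (hE' : ∀ a ∈ D', ∀ b ∈ K, b ∉ E' → ¬G.Adj a b) :
    ((Finset.univ \ K) \ (X ∪ Y)).card + (K \ (E ∪ E')).card < m := by
  have hdis : Disjoint ((Finset.univ \ K) \ (X ∪ Y)) (K \ (E ∪ E')) := by
    rw [Finset.disjoint_left]
    intro v hv hv'
    simp only [Finset.mem_sdiff] at hv hv'
    exact hv.1.2 hv'.1
  rw [← Finset.card_union_of_disjoint hdis]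
  by_contra hcon
  have hXK : ∀ a ∈ X ∪ Y, a ∉ K := by
    intro a ha
    exact (Finset.mem_sdiff.1 ((hX.union hY).1 ha)).2
  have hDD : D ∪ D' ⊆ X ∪ Y := Finset.union_subset_union hD hD'
  refine hG.anti (D ∪ D') _ ?_ ?_ ?_ (not_lt.1 hcon)
  · rw [Finset.disjoint_left]
    intro a ha hb
    have h1 := hXK a (hDD ha)
    have h2 := hDD ha
    rcases Finset.mem_union.1 hb with hb | hb
    · exact (Finset.mem_sdiff.1 hb).2 h2
    · exact h1 (Finset.mem_sdiff.1 hb).1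
  · intro a ha b hb
    rcases Finset.mem_union.1 hb with hb | hb
    · rw [Finset.mem_sdiff] at hb
      exact (hX.union hY).2 a (hDD ha) b hb.1 hb.2
    · simp only [Finset.mem_sdiff, Finset.mem_union, not_or] at hb
      rcases Finset.mem_union.1 ha with ha | ha
      · exact hE a ha b hb.1 hb.2.1
      · exact hE' a ha b hb.1 hb.2.2
  · rw [Finset.card_union_of_disjoint
      (Finset.disjoint_of_subset_left hD (Finset.disjoint_of_subset_right hD' hXY))]
    omega

/-- The bound with the rounding removed. With `x`, `y`, `z` the three large components and `r` the
remainder outside the central clique of size `k`, the estimates from `cross` and `branch` add up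
through `two_mul_card_le` to `2 * k < (3 * m - (x + y + z) - 3 * r) + 3 * m`. Since
`x + y + z + r = n - k < 3 * m`, this contradicts `9 * m ≤ 2 * n`. -/
theorem not_noBiclique {V : Type*} [Fintype V] [DecidableEq V] {G : SimpleGraph V}
    {m : ℕ} (h : IsChordal G) (hm : 0 < m) (hn : 9 * m ≤ 2 * Fintype.card V) :
    ¬NoBiclique G m := by
  intro hG
  obtain ⟨K, hK, hKC⟩ := hG.exists_central h
  have hKm := hG.card_clique hK
  set U := (Finset.univ : Finset V) \ K with hU
  have hUc : U.card + K.card = Fintype.card V := by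
    rw [hU, Finset.card_sdiff_add_card_eq_card (Finset.subset_univ _), Finset.card_univ]
  have hU5 : 5 * m ≤ 2 * U.card := by omega
  have h0 := ClosedIn.empty G U
  -- Whenever greedy balancing would succeed, a further large component exists.
  have next : ∀ I J : Finset V, ClosedIn G U I → ClosedIn G U J → Disjoint I J → I.card < m →
      m ≤ (U \ J).card → ∃ C, ConnSet G C ∧ ClosedIn G U C ∧ Disjoint C I ∧ Disjoint C J ∧
        m < 2 * C.card := by
    intro I J hI hJ hIJ hIm hJm
    by_contra hcon
    push Not at hcon
    exact absurd (hG.greedy hU5 hI hJ hIJ hIm hcon) (by omega)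
  obtain ⟨X, hXc, hX, -, -, hXb⟩ := next ∅ ∅ h0 h0 (by simp) (by simpa using hm) (by simp; omega)
  have hXm := hKC X hXc hX
  have hXs := Finset.card_sdiff_add_card_eq_card hX.1
  obtain ⟨Y, hYc, hY, -, hYX, hYb⟩ := next ∅ X h0 hX (by simp) (by simpa using hm) (by omega)
  have hYm := hKC Y hYc hY
  have hYs := Finset.card_sdiff_add_card_eq_card hY.1
  obtain ⟨Z, hZc, hZ, hZX, hZY, hZb⟩ := next X Y hX hY hYX.symm hXm (by omega)
  have hZm := hKC Z hZc hZ
  -- A fourth large component would allow a two-against-two split.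
  have rest : ∀ I P Q : Finset V, ConnSet G I → ClosedIn G U I → ClosedIn G U P →
      ClosedIn G U Q → Disjoint I P → Disjoint I Q → Disjoint P Q → I.card < m → m < 2 * I.card →
      m < 2 * P.card → m < 2 * Q.card → (U \ (P ∪ Q)).card < m := by
    intro I P Q hIc hI hP hQ hIP hIQ hPQ hIm hIb hPb hQb
    by_contra hcon
    obtain ⟨C, hCc, hC, hCI, hCPQ, hCb⟩ := next I (P ∪ Q) hI (hP.union hQ)
      (Finset.disjoint_union_right.2 ⟨hIP, hIQ⟩) hIm (not_lt.1 hcon)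
    refine hG.anti (P ∪ Q) (I ∪ C) ?_ ?_ ?_ ?_
    · exact Finset.disjoint_union_right.2
        ⟨(Finset.disjoint_union_right.2 ⟨hIP, hIQ⟩).symm, hCPQ.symm⟩
    · intro a ha b hb
      refine (hP.union hQ).2 a ha b ((hI.union hC).1 hb) fun hbPQ => ?_
      have h1 : Disjoint (I ∪ C) (P ∪ Q) :=
        Finset.disjoint_union_left.2 ⟨Finset.disjoint_union_right.2 ⟨hIP, hIQ⟩, hCPQ⟩
      exact Finset.disjoint_left.1 h1 hb hbPQ
    · rw [Finset.card_union_of_disjoint hPQ]; omega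
    · rw [Finset.card_union_of_disjoint hCI.symm]; omega
  have hrX := rest X Y Z hXc hX hY hZ hYX.symm hZX.symm hZY.symm hXm hXb hYb hZb
  have hsmall : ∀ C, C ⊆ U → Disjoint C X → Disjoint C Y → Disjoint C Z → 2 * C.card ≤ m := by
    intro C hC hCX hCY hCZ
    have h1 : X ∪ C ⊆ U \ (Y ∪ Z) := by
      intro v hv
      rw [Finset.mem_sdiff]
      refine ⟨Finset.union_subset hX.1 hC hv, fun hv' => ?_⟩
      have h2 : Disjoint (X ∪ C) (Y ∪ Z) := by
        simp only [Finset.disjoint_union_left, Finset.disjoint_union_right]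
        exact ⟨⟨hYX.symm, hCY⟩, hZX.symm, hCZ⟩
      exact Finset.disjoint_left.1 h2 hv hv'
    have h2 := Finset.card_le_card h1
    rw [Finset.card_union_of_disjoint hCX.symm] at h2
    omega
  obtain ⟨D₁, E₁, hD₁, hDm₁, hE₁, hEm₁, hA₁⟩ := hG.branch h hn hK hXc hX hY hZ hYX.symm hZX.symm
    hZY.symm hXm hYm hZm hXb.le hsmall
  obtain ⟨D₂, E₂, hD₂, hDm₂, hE₂, hEm₂, hA₂⟩ := hG.branch h hn hK hYc hY hX hZ hYX hZY.symm
    hZX.symm hYm hXm hZm hYb.le (fun C h1 h2 h3 h4 => hsmall C h1 h3 h2 h4)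
  obtain ⟨D₃, E₃, hD₃, hDm₃, hE₃, hEm₃, hA₃⟩ := hG.branch h hn hK hZc hZ hX hY hZX hZY
    hYX.symm hZm hXm hYm hZb.le (fun C h1 h2 h3 h4 => hsmall C h1 h3 h4 h2)
  have c12 := hG.cross hX hY hYX.symm hD₁ hD₂ hDm₁ hDm₂ hA₁ hA₂
  have c13 := hG.cross hX hZ hZX.symm hD₁ hD₃ hDm₁ hDm₃ hA₁ hA₃
  have c23 := hG.cross hY hZ hZY.symm hD₂ hD₃ hDm₂ hDm₃ hA₂ hA₃
  have hcount := two_mul_card_le hE₁ hE₂ hE₃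
  have s12 := Finset.card_sdiff_add_card_eq_card (hX.union hY).1
  have s13 := Finset.card_sdiff_add_card_eq_card (hX.union hZ).1
  have s23 := Finset.card_sdiff_add_card_eq_card (hY.union hZ).1
  rw [Finset.card_union_of_disjoint hYX.symm] at s12
  rw [Finset.card_union_of_disjoint hZX.symm] at s13
  rw [Finset.card_union_of_disjoint hZY.symm] at s23
  rw [← hU] at c12 c13 c23
  have hXR : X ⊆ U \ (Y ∪ Z) := fun v hv => Finset.mem_sdiff.2
    ⟨hX.1 hv, Finset.disjoint_left.1 (Finset.disjoint_union_right.2 ⟨hYX.symm, hZX.symm⟩) hv⟩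
  have hXRc := Finset.card_le_card hXR
  omega

/-- every chordal graph on `n` vertices, or its complement,
contains `K_{m,m}` with `m ≥ ⌊2n/9⌋`. -/
theorem stmt_7 {V : Type*} [Fintype V] (G : SimpleGraph V) (h : IsChordal G) :
    ∃ m : ℕ, 2 * Fintype.card V / 9 ≤ m ∧ (HasBiclique G m ∨ HasBiclique Gᶜ m) := by
  classical
  refine ⟨2 * Fintype.card V / 9, le_rfl, ?_⟩
  rcases Nat.eq_zero_or_pos (2 * Fintype.card V / 9) with h0 | hpos
  · exact Or.inl ⟨∅, ∅, by simp, by simp [h0], by simp [h0], by simp⟩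
  · by_contra hcon
    rw [not_or] at hcon
    exact not_noBiclique h hpos (by omega) (noBiclique_of_not hcon.1 hcon.2)
end

section
/- Let T be a finite tree and F a finite family of subtrees of T with |F| = n. For v ∈ V(T), let F_v be the subtrees containing v, and for a component C of T − v let F_C be the subtrees contained in C. Suppose: (a) |F_v| < 4n/9 for every vertex v, (b) T has maximum degree at most 3, and (c) there do not exist two vertices u, v and components C of T − v and C' of T − u with C ∩ C' = ∅, |F_C| ≥ 2n/9 and |F_{C'}| ≥ 2n/9. Then there exists a vertex v of degree 3 in T such that each of the three components C₁, C₂, C₃ of T − v satisfies n/9 ≤ |F_{C_i}| ≤ 2n/9. -/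
/-!
If some vertex `v` has every component of `T - v` containing at most `2n/9` members of the family,
it is the desired vertex: more than `5n/9` members avoid `v`, each lies in a single component, and
there are at most three components, so there are exactly three and each holds more than
`5n/9 - 2 · 2n/9 = n/9` members.

Otherwise every vertex `v` has a neighbour `w` whose component of `T - v` holds more than `2n/9`
members. Choose such an adjacent pair with the smallest component, and let `u` be a neighbour of
`w` whose component of `T - w` is heavy too. If `u ≠ v`, the component of `T - w` at `u` is strictly
inside the component of `T - v` at `w` (`compAt_ssubset`), against minimality. If `u = v`, the two
components are the two sides of the edge `vw`, hence disjoint (`compAt_inter`), against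
hypothesis (c). Both facts come from every edge of a tree being a bridge.
-/

/-- `S` is a subtree of `T`: a nonempty set of vertices inducing a connected subgraph. -/
def IsSubtree {α : Type*} (T : SimpleGraph α) (S : Set α) : Prop :=
  S.Nonempty ∧ (T.induce S).Connected

/-- `C` is (the vertex set of) a connected component of `T - v`:
it avoids `v`, is nonempty, induces a connected subgraph, and is maximal such. -/
def IsCompOf {α : Type*} (T : SimpleGraph α) (C : Set α) (v : α) : Prop :=
  v ∉ C ∧ C.Nonempty ∧ (T.induce C).Connected ∧
    ∀ D : Set α, v ∉ D → D.Nonempty → (T.induce D).Connected → C ⊆ D → D = C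

/-- The component of `T - v` containing `x`, as the set of endpoints of walks from `x` that
avoid `v`. It is empty when `x = v`. -/
def compAt {α : Type*} (T : SimpleGraph α) (v x : α) : Set α :=
  {y | ∃ p : T.Walk x y, v ∉ p.support}

section

variable {α : Type*} {T : SimpleGraph α}

lemma mem_compAt_self {v x : α} (h : x ≠ v) : x ∈ compAt T v x :=
  ⟨SimpleGraph.Walk.nil, by simpa using h.symm⟩

lemma not_mem_compAt {v x : α} : v ∉ compAt T v x := fun ⟨p, hp⟩ => hp p.end_mem_support

lemma compAt_subset_of_mem {v x y : α} (h : y ∈ compAt T v x) : compAt T v y ⊆ compAt T v x := by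
  rintro z ⟨q, hq⟩
  obtain ⟨p, hp⟩ := h
  exact ⟨p.append q, by simp [SimpleGraph.Walk.mem_support_append_iff, hp, hq]⟩

lemma subset_compAt {S : Set α} (hS : (T.induce S).Connected) {v x : α} (hv : v ∉ S)
    (hx : x ∈ S) : S ⊆ compAt T v x := by
  intro y hy
  obtain ⟨p⟩ := hS.preconnected ⟨x, hx⟩ ⟨y, hy⟩
  refine ⟨p.map (SimpleGraph.Embedding.induce S).toHom, fun h => ?_⟩
  have h' : v ∈ p.support.map (SimpleGraph.Embedding.induce S).toHom :=
    (SimpleGraph.Walk.support_map (SimpleGraph.Embedding.induce S).toHom p).subst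
      (motive := fun l => v ∈ l) h
  obtain ⟨a, -, ha⟩ := List.mem_map.1 h'
  exact hv (ha ▸ a.2)

lemma compAt_connected {v x : α} (h : x ≠ v) : (T.induce (compAt T v x)).Connected := by
  classical
  refine SimpleGraph.induce_connected_of_patches x (mem_compAt_self h) ?_
  rintro y ⟨p, hp⟩
  refine ⟨{z | z ∈ p.support}, ?_, p.start_mem_support, p.end_mem_support,
    p.connected_induce_support.preconnected _ _⟩
  intro z hz
  exact ⟨p.takeUntil z hz, fun h' => hp (p.support_takeUntil_subset_support hz h')⟩

lemma isCompOf_compAt {v x : α} (h : x ≠ v) : IsCompOf T (compAt T v x) v :=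
  ⟨not_mem_compAt, ⟨x, mem_compAt_self h⟩, compAt_connected h, fun _ hv _ hD hsub =>
    (subset_compAt hD hv (hsub (mem_compAt_self h))).antisymm hsub⟩

/-- In a connected graph every vertex other than `v` lies in the component of some neighbour
of `v`. -/
lemma exists_adj_mem_compAt (hT : T.Connected) {v x : α} (h : x ≠ v) :
    ∃ w, T.Adj v w ∧ x ∈ compAt T v w := by
  obtain ⟨p, hp⟩ := hT.exists_isPath v x
  cases p with
  | nil => exact absurd rfl h
  | cons hadj q => exact ⟨_, hadj, q, ((SimpleGraph.Walk.cons_isPath_iff _ _).1 hp).2⟩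

lemma IsCompOf.exists_adj (hT : T.Connected) {v : α} {C : Set α} (hC : IsCompOf T C v) :
    ∃ w, T.Adj v w ∧ C = compAt T v w := by
  obtain ⟨hv, ⟨x, hx⟩, hconn, hmax⟩ := hC
  obtain ⟨w, hw, hxw⟩ := exists_adj_mem_compAt hT (v := v) (x := x) (fun e => hv (e ▸ hx))
  refine ⟨w, hw, (hmax _ not_mem_compAt ⟨x, hxw⟩ (compAt_connected hw.ne') ?_).symm⟩
  exact (subset_compAt hconn hv hx).trans (compAt_subset_of_mem hxw)

lemma mem_edges_of_adj (hT : T.IsTree) {v w : α} (h : T.Adj v w) (p : T.Walk v w) :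
    s(v, w) ∈ p.edges :=
  SimpleGraph.isBridge_iff_forall_walk_mem_edges.1
    (SimpleGraph.isAcyclic_iff_forall_adj_isBridge.1 hT.isAcyclic h) p

/-- The two sides of an edge of a tree are disjoint: a common vertex would give a walk from `v`
to `w` not using the edge `vw`. -/
lemma compAt_inter (hT : T.IsTree) {v w : α} (h : T.Adj v w) :
    compAt T v w ∩ compAt T w v = ∅ := by
  rw [Set.eq_empty_iff_forall_notMem]
  rintro x ⟨⟨p, hp⟩, ⟨q, hq⟩⟩
  have := mem_edges_of_adj hT h (q.append p.reverse)
  rw [SimpleGraph.Walk.edges_append, List.mem_append, SimpleGraph.Walk.edges_reverse,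
    List.mem_reverse] at this
  rcases this with h' | h'
  · exact hq (q.snd_mem_support_of_mem_edges h')
  · exact hp (p.fst_mem_support_of_mem_edges h')

lemma compAt_ssubset (hT : T.IsTree) {v w u : α} (hvw : T.Adj v w) (hwu : T.Adj w u)
    (huv : u ≠ v) : compAt T w u ⊂ compAt T v w := by
  classical
  refine ⟨?_, fun hsub => not_mem_compAt (hsub (mem_compAt_self hvw.ne'))⟩
  rintro x ⟨p, hp⟩
  refine ⟨SimpleGraph.Walk.cons hwu p, ?_⟩
  rw [SimpleGraph.Walk.support_cons, List.mem_cons, not_or]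
  refine ⟨hvw.ne, fun hv => ?_⟩
  -- The walk `w, u, …, v` would bypass the bridge `wv`.
  have := mem_edges_of_adj hT hvw.symm (SimpleGraph.Walk.cons hwu (p.takeUntil v hv))
  rw [SimpleGraph.Walk.edges_cons, List.mem_cons] at this
  rcases this with h' | h'
  · exact huv (Sym2.congr_right.1 h').symm
  · exact hp (p.support_takeUntil_subset_support hv
      ((p.takeUntil v hv).fst_mem_support_of_mem_edges h'))

/-- Every member of the family contains `v` or lies in the component of a neighbour of `v`. -/
lemma le_ncard_add_sum (hT : T.Connected) {n : ℕ} (F : Fin n → Set α)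
    (hF : ∀ i, IsSubtree T (F i)) (v : α) (N : Finset α) (hN : ∀ w, T.Adj v w → w ∈ N) :
    n ≤ ({i | v ∈ F i} : Set (Fin n)).ncard +
      ∑ w ∈ N, ({i | F i ⊆ compAt T v w} : Set (Fin n)).ncard := by
  have hcover : (Set.univ : Set (Fin n)) ⊆
      {i | v ∈ F i} ∪ ⋃ w ∈ N, {i | F i ⊆ compAt T v w} := by
    intro i _
    by_cases hv : v ∈ F i
    · exact Or.inl hv
    · right
      obtain ⟨⟨x, hx⟩, hconn⟩ := hF i
      obtain ⟨w, hw, hxw⟩ := exists_adj_mem_compAt hT (v := v) (x := x) (fun e => hv (e ▸ hx))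
      simp only [Set.mem_iUnion]
      exact ⟨w, hN w hw, (subset_compAt hconn hv hx).trans (compAt_subset_of_mem hxw)⟩
  calc n = (Set.univ : Set (Fin n)).ncard := by simp [Set.ncard_univ]
    _ ≤ _ := Set.ncard_le_ncard hcover (Set.toFinite _)
    _ ≤ _ := Set.ncard_union_le _ _
    _ ≤ _ := Nat.add_le_add_left (Finset.set_ncard_biUnion_le _ _) _

end

/-- under hypotheses (a) `|F_v| < 4n/9` for every vertex, (b) max degree
at most `3`, and (c) no two disjoint components each containing at least `2n/9`
subtrees, there is a degree-3 vertex `v` all of whose components `C` of `T - v`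
satisfy `n/9 ≤ |F_C| ≤ 2n/9`. -/
theorem stmt_8 {α : Type*} [Fintype α] (T : SimpleGraph α) (hT : T.IsTree)
    (n : ℕ) (F : Fin n → Set α) (hF : ∀ i, IsSubtree T (F i))
    (hdeg : ∀ v : α, ({w | T.Adj v w} : Set α).ncard ≤ 3)
    (ha : ∀ v : α, (({i | v ∈ F i} : Set (Fin n)).ncard : ℝ) < 4 * n / 9)
    (hc : ¬∃ (u v : α) (C C' : Set α), IsCompOf T C v ∧ IsCompOf T C' u ∧
      C ∩ C' = ∅ ∧
      2 * (n : ℝ) / 9 ≤ (({i | F i ⊆ C} : Set (Fin n)).ncard : ℝ) ∧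
      2 * (n : ℝ) / 9 ≤ (({i | F i ⊆ C'} : Set (Fin n)).ncard : ℝ)) :
    ∃ v : α, ({w | T.Adj v w} : Set α).ncard = 3 ∧
      ∀ C : Set α, IsCompOf T C v →
        (n : ℝ) / 9 ≤ (({i | F i ⊆ C} : Set (Fin n)).ncard : ℝ) ∧
        (({i | F i ⊆ C} : Set (Fin n)).ncard : ℝ) ≤ 2 * n / 9 := by
  classical
  let g : α → α → ℕ := fun v w => ({i | F i ⊆ compAt T v w} : Set (Fin n)).ncard
  obtain ⟨v, hv⟩ : ∃ v, ∀ w, T.Adj v w → (g v w : ℝ) ≤ 2 * n / 9 := by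
    by_contra! hcon
    obtain ⟨v₀⟩ := hT.connected.nonempty
    obtain ⟨w₀, h₀⟩ := hcon v₀
    let P : Set (α × α) := {q | T.Adj q.1 q.2 ∧ 2 * (n : ℝ) / 9 < g q.1 q.2}
    obtain ⟨⟨v, w⟩, ⟨hvw, hg⟩, hmin⟩ := Set.exists_min_image P
      (fun q => (compAt T q.1 q.2).ncard) (Set.toFinite P) ⟨(v₀, w₀), h₀⟩
    obtain ⟨u, hwu, hgu⟩ := hcon w
    by_cases huv : u = v
    · subst huv
      exact hc ⟨w, u, _, _, isCompOf_compAt hvw.ne', isCompOf_compAt hvw.ne,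
        compAt_inter hT hvw, hg.le, hgu.le⟩
    · exact absurd (hmin (w, u) ⟨hwu, hgu⟩) (not_le.2
        (Set.ncard_lt_ncard (compAt_ssubset hT hvw hwu huv) (Set.toFinite _)))
  let N : Finset α := Finset.univ.filter (T.Adj v)
  have hNcard : ({w | T.Adj v w} : Set α).ncard = N.card := by
    rw [← Set.ncard_coe_finset]; simp [N]
  have hN3 : N.card ≤ 3 := hNcard ▸ hdeg v
  have hav := ha v
  have hn : (0 : ℝ) < n := by
    have : (0 : ℝ) ≤ (({i | v ∈ F i} : Set (Fin n)).ncard : ℝ) := Nat.cast_nonneg _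
    linarith
  have hsum : (n : ℝ) ≤ (({i | v ∈ F i} : Set (Fin n)).ncard : ℝ) + ∑ w ∈ N, (g v w : ℝ) := by
    exact_mod_cast le_ncard_add_sum hT.connected F hF v N (by simp [N])
  have hbound : ∀ M ⊆ N, ∑ w ∈ M, (g v w : ℝ) ≤ M.card * (2 * n / 9) := by
    intro M hM
    rw [← nsmul_eq_mul]
    exact Finset.sum_le_card_nsmul _ _ _ fun w hw => hv w (Finset.mem_filter.1 (hM hw)).2
  have hcard : N.card = 3 := by
    by_contra hne
    have h2 : (N.card : ℝ) ≤ 2 := by exact_mod_cast (by omega : N.card ≤ 2)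
    have := hbound N subset_rfl
    nlinarith
  refine ⟨v, hNcard.trans hcard, fun C hC => ?_⟩
  obtain ⟨w, hw, rfl⟩ := hC.exists_adj hT.connected
  refine ⟨?_, hv w hw⟩
  have hwN : w ∈ N := by simpa [N] using hw
  have hrest := hbound (N.erase w) (Finset.erase_subset _ _)
  rw [Finset.card_erase_of_mem hwN, hcard] at hrest
  rw [← Finset.add_sum_erase N _ hwN] at hsum
  norm_num at hrest
  change (n : ℝ) / 9 ≤ (g v w : ℝ)
  linarith
end

section
/- Let T be a finite tree with k ≥ 3 leaves in which every vertex has degree at most 3. For each leaf v_i, let r_i be the vertex of degree 3 in T closest to v_i. Then the minimal subtree of T spanning {r₁, …, r_k} (the trunk of T) is a tree with at most ⌊k/2⌋ leaves. -/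
/-!
Every trunk leaf `x` (a vertex of `S` with at most one neighbour in `S`) is `r v` for at least two
leaves `v` of `T`; since the fibres of `r` are disjoint, twice the number of trunk leaves is at
most `k`.

By minimality of `S`, a trunk leaf `x` is some `r v`, as otherwise `x` could be pruned from `S`
(`connected_diff_singleton`); hence `x` has degree 3 and at least two neighbours outside `S`.
Beyond each such neighbour `y` there is a leaf `v` of `T` (`exists_leaf_beyond`). The path from `x`
to `r v` stays in `S`, so it does not start towards `y`, and therefore the path from `v` to `r v`
runs through `x` (`exists_path_through`). As `x` has degree 3, this forces `r v = x`. Leaves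
obtained from different neighbours of `x` are different by uniqueness of paths.
-/

/-- In a finite acyclic graph, walking from `x` through a neighbour `y` and never turning back ends
at a vertex of degree 1. -/
lemma exists_leaf_beyond {α : Type*} [Fintype α] {T : SimpleGraph α} (hT : T.IsAcyclic)
    {x y : α} (h : T.Adj x y) :
    ∃ (v : α) (p : T.Walk y v), (SimpleGraph.Walk.cons h p).IsPath ∧
      ({w | T.Adj v w} : Set α).ncard = 1 := by
  by_contra! hcon
  -- Without such a leaf, paths through `y` can be extended indefinitely.
  have key : ∀ n : ℕ, ∃ (v : α) (p : T.Walk y v),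
      (SimpleGraph.Walk.cons h p).IsPath ∧ p.length = n := by
    intro n
    induction n with
    | zero => exact ⟨y, .nil, by simp [h.ne], rfl⟩
    | succ n ih =>
      obtain ⟨v, p, hp, hn⟩ := ih
      have hadj : T.Adj v (SimpleGraph.Walk.cons h p).penultimate :=
        ((SimpleGraph.Walk.cons h p).adj_penultimate (by simp)).symm
      obtain ⟨w, hw, hne⟩ : ∃ w, T.Adj v w ∧ w ≠ (SimpleGraph.Walk.cons h p).penultimate := by
        by_contra! hall
        refine hcon v p hp (Set.ncard_eq_one.mpr
          ⟨(SimpleGraph.Walk.cons h p).penultimate, ?_⟩)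
        ext w
        exact ⟨hall w, fun hw => by rw [Set.mem_singleton_iff.mp hw]; exact hadj⟩
      refine ⟨w, p.concat hw, ?_, by simp [hn]⟩
      have : ((SimpleGraph.Walk.cons h p).concat hw).IsPath :=
        hp.concat (fun hmem => hne (hT.eq_penultimate_of_adj_end hp hw hmem)) hw
      simpa using this
  obtain ⟨v, p, hp, hn⟩ := key (Fintype.card α)
  have := ((SimpleGraph.Walk.cons_isPath_iff _ _).mp hp).1.length_lt
  omega

/-- In an acyclic graph, a path leaving `x` towards `y` and a path from `x` avoiding `y` glue to a path
through `x`. -/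
lemma exists_path_through {α : Type*} {T : SimpleGraph α} (hT : T.IsAcyclic)
    {x y v z : α} (h : T.Adj x y) (p : T.Walk y v) (hp : (SimpleGraph.Walk.cons h p).IsPath)
    (q : T.Walk x z) (hq : q.IsPath) (hy : y ∉ q.support) :
    ∃ s : T.Walk v z, s.IsPath ∧ x ∈ s.support := by
  refine ⟨(SimpleGraph.Walk.cons h p).reverse.append q, ?_, by simp⟩
  rw [hT.isPath_iff_isChain, SimpleGraph.Walk.edges_append, List.isChain_append]
  refine ⟨(hT.isPath_iff_isChain _).mp hp.reverse, (hT.isPath_iff_isChain _).mp hq, ?_⟩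
  cases q with
  | nil => simp
  | @cons _ u _ h' q' =>
    have hne : y ≠ u := fun e => hy (by simp [e])
    simp [h'.ne, hne]

/-- A vertex with at most one neighbour in a connected set `S` can be pruned from `S`, provided it
is not the only vertex of `S`. -/
lemma connected_diff_singleton {α : Type*} [Fintype α] {T : SimpleGraph α} {S : Set α}
    (hS : (T.induce S).Connected) {x z : α} (hx : x ∈ S) (hz : z ∈ S) (hzx : z ≠ x)
    (hdeg : ({y | y ∈ S ∧ T.Adj x y} : Set α).ncard ≤ 1) :
    (T.induce (S \ {x})).Connected := by
  classical
  obtain ⟨p⟩ := hS.preconnected ⟨x, hx⟩ ⟨z, hz⟩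
  obtain ⟨u, hu⟩ : ∃ u : S, (T.induce S).Adj ⟨x, hx⟩ u := by
    cases p with
    | nil => exact absurd rfl hzx
    | cons h _ => exact ⟨_, h⟩
  have huniq := (Set.ncard_le_one (Set.toFinite _)).mp hdeg
  have hd : (T.induce S).degree ⟨x, hx⟩ = 1 :=
    SimpleGraph.degree_eq_one_iff_existsUnique_adj.mpr
      ⟨u, hu, fun w hw => Subtype.ext (huniq _ ⟨w.2, hw⟩ _ ⟨u.2, hu⟩)⟩
  have hc := hS.induce_compl_singleton_of_degree_eq_one hd
  let f : (T.induce S).induce {⟨x, hx⟩}ᶜ →g T.induce (S \ {x}) :=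
    { toFun := fun a => ⟨a.1.1, a.1.2, fun e => a.2 (Subtype.ext e)⟩
      map_rel' := fun h => h }
  exact hc.map f fun b => ⟨⟨⟨b.1, b.2.1⟩, fun e => b.2.2 (congrArg Subtype.val e)⟩, rfl⟩


/-- let `T` be a finite tree with maximum degree `3` and `k ≥ 3`
leaves, for each leaf `v` let `r v` be the degree-3 vertex closest to `v` (the path
from `v` to `r v` contains no other degree-3 vertex), and let `S` be the minimal
subtree of `T` containing all the `r v` (the trunk).  Then the trunk has at most
`⌊k/2⌋` leaves. -/
theorem stmt_12 {α : Type*} [Fintype α] (T : SimpleGraph α) (hT : T.IsTree)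
    (k : ℕ) (hk : 3 ≤ k)
    (hleaves : ({v | ({w | T.Adj v w} : Set α).ncard = 1} : Set α).ncard = k)
    (hdeg : ∀ v : α, ({w | T.Adj v w} : Set α).ncard ≤ 3)
    (r : α → α)
    (hr : ∀ v : α, ({w | T.Adj v w} : Set α).ncard = 1 →
      ({w | T.Adj (r v) w} : Set α).ncard = 3 ∧
      ∀ (p : T.Walk v (r v)), p.IsPath →
        ∀ w ∈ p.support, ({x | T.Adj w x} : Set α).ncard = 3 → w = r v)
    (S : Set α)
    (hS₁ : ∀ v : α, ({w | T.Adj v w} : Set α).ncard = 1 → r v ∈ S)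
    (hS₂ : (T.induce S).Connected)
    (hS₃ : ∀ S' : Set α, (∀ v : α, ({w | T.Adj v w} : Set α).ncard = 1 → r v ∈ S') →
      (T.induce S').Connected → S ⊆ S') :
    ({x | x ∈ S ∧ ({y | y ∈ S ∧ T.Adj x y} : Set α).ncard ≤ 1} : Set α).ncard ≤ k / 2 := by
  classical
  -- A leaf reached from `x` through a neighbour outside `S` is assigned to `x` by `r`.
  have hr_eq : ∀ {x y v : α} (_ : x ∈ S) (_ : ({w | T.Adj x w} : Set α).ncard = 3)
      (h : T.Adj x y) (_ : y ∉ S) (p : T.Walk y v) (_ : (SimpleGraph.Walk.cons h p).IsPath)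
      (_ : ({w | T.Adj v w} : Set α).ncard = 1), r v = x := by
    intro x y v hx hx3 h hy p hp hv
    obtain ⟨q, hq, hqS⟩ : ∃ q : T.Walk x (r v), q.IsPath ∧ ∀ a ∈ q.support, a ∈ S := by
      obtain ⟨q, hq⟩ := hS₂.exists_isPath ⟨x, hx⟩ ⟨r v, hS₁ v hv⟩
      let e : T.induce S ↪g T := SimpleGraph.Embedding.induce S
      refine ⟨q.map e.toHom, hq.map e.injective, fun a ha => ?_⟩
      have ha' : a ∈ q.support.map e.toHom := SimpleGraph.Walk.support_map e.toHom q ▸ ha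
      obtain ⟨b, -, rfl⟩ := List.mem_map.mp ha'
      exact b.2
    obtain ⟨s, hs, hxs⟩ := exists_path_through hT.isAcyclic h p hp q hq fun hm => hy (hqS y hm)
    exact ((hr v hv).2 s hs x hxs hx3).symm
  have hfib : ∀ x, x ∈ S → ({y | y ∈ S ∧ T.Adj x y} : Set α).ncard ≤ 1 →
      ∃ v₁ v₂, v₁ ≠ v₂ ∧ (({w | T.Adj v₁ w} : Set α).ncard = 1 ∧ r v₁ = x) ∧
        (({w | T.Adj v₂ w} : Set α).ncard = 1 ∧ r v₂ = x) := by
    intro x hx hd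
    have hx3 : ({w | T.Adj x w} : Set α).ncard = 3 := by
      by_contra hne
      have hxr : ∀ v, ({w | T.Adj v w} : Set α).ncard = 1 → r v ≠ x :=
        fun v hv e => hne (e ▸ (hr v hv).1)
      obtain ⟨v, hv⟩ := Set.nonempty_of_ncard_ne_zero (hleaves.trans_ne (by omega : k ≠ 0))
      have := hS₃ (S \ {x}) (fun v hv => ⟨hS₁ v hv, hxr v hv⟩)
        (connected_diff_singleton hS₂ hx (hS₁ v hv) (hxr v hv) hd)
      exact (this hx).2 rfl
    have hout : 1 < ({w | T.Adj x w} \ {y | y ∈ S ∧ T.Adj x y} : Set α).ncard := by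
      have := Set.ncard_le_ncard_sdiff_add_ncard {w | T.Adj x w} {y | y ∈ S ∧ T.Adj x y}
        (Set.toFinite _)
      omega
    obtain ⟨y₁, hy₁, y₂, hy₂, hne⟩ := (Set.one_lt_ncard (Set.toFinite _)).mp hout
    have h₁ : T.Adj x y₁ := hy₁.1
    have h₂ : T.Adj x y₂ := hy₂.1
    obtain ⟨v₁, p₁, hp₁, hv₁⟩ := exists_leaf_beyond hT.isAcyclic h₁
    obtain ⟨v₂, p₂, hp₂, hv₂⟩ := exists_leaf_beyond hT.isAcyclic h₂
    refine ⟨v₁, v₂, ?_, ⟨hv₁, hr_eq hx hx3 h₁ (fun h => hy₁.2 ⟨h, h₁⟩) p₁ hp₁ hv₁⟩,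
      ⟨hv₂, hr_eq hx hx3 h₂ (fun h => hy₂.2 ⟨h, h₂⟩) p₂ hp₂ hv₂⟩⟩
    rintro rfl
    have := congrArg SimpleGraph.Walk.snd
      (congrArg Subtype.val ((hT.isAcyclic.subsingleton_path x v₁).elim ⟨_, hp₁⟩ ⟨_, hp₂⟩))
    exact hne (by simpa using this)
  rw [Nat.le_div_iff_mul_le two_pos, mul_comm, ← hleaves, Set.ncard_eq_toFinset_card',
    Set.ncard_eq_toFinset_card']
  set A := ({x | x ∈ S ∧ ({y | y ∈ S ∧ T.Adj x y} : Set α).ncard ≤ 1} : Set α).toFinset with hA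
  set L := ({v | ({w | T.Adj v w} : Set α).ncard = 1} : Set α).toFinset with hL
  calc 2 * A.card = A.card * 2 := mul_comm _ _
    _ ≤ ∑ x ∈ A, (L.filter (fun v => r v = x)).card := by
      rw [← smul_eq_mul]
      refine Finset.card_nsmul_le_sum _ _ _ fun x hx => ?_
      obtain ⟨hxS, hxd⟩ : x ∈ S ∧ ({y | y ∈ S ∧ T.Adj x y} : Set α).ncard ≤ 1 := by
        simpa [hA] using hx
      obtain ⟨v₁, v₂, hne, h₁, h₂⟩ := hfib x hxS hxd
      exact Finset.one_lt_card.mpr ⟨v₁, by simpa [hL] using h₁, v₂, by simpa [hL] using h₂, hne⟩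
    _ = (L.filter (fun v => r v ∈ A)).card := by
      rw [Finset.card_eq_sum_card_fiberwise (f := r) (t := A) (fun v hv => by simp_all)]
      refine Finset.sum_congr rfl fun x hx => congrArg _ ?_
      ext v
      simp only [Finset.mem_filter]
      exact ⟨fun h => ⟨⟨h.1, h.2 ▸ hx⟩, h.2⟩, fun h => ⟨h.1.1, h.2⟩⟩
    _ ≤ L.card := Finset.card_filter_le _ _
end
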